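/- arXiv:2106.11552 — 5 statements merged into one kernel-verified Lean document; each statement's English description precedes it below -/
import Mathlib

section
/- Let m ≥ 1 and let H be a nontrivial finitely generated subgroup of the free group F_m. Then the language L_H is irreducible if and only if H is conjugacy reduced and H is not cyclic. -/
/-- The language of reduced words over `Σ = A ∪ A⁻¹` (letters encoded as `Fin m × Bool`)
that represent elements of the subgroup `H` of the free group `F_m`. -/
def LH (m : ℕ) (H : Subgroup (FreeGroup (Fin m))) : Set (List (Fin m × Bool)) :=
  {w | FreeGroup.reduce w = w ∧ FreeGroup.mk w ∈ H}

/-- A language `L` is irreducible if for all `w₁, w₂ ∈ L` there is a word `w`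
with `w₁ w w₂ ∈ L`. -/
def IrreducibleLang {α : Type*} (L : Set (List α)) : Prop :=
  ∀ w₁ ∈ L, ∀ w₂ ∈ L, ∃ w : List α, w₁ ++ w ++ w₂ ∈ L

/-- `H ≤ F_m` is conjugacy reduced if there is no letter `x ∈ Σ` such that every
nonempty word of `L_H` begins with `x⁻¹` and ends with `x`.
(The inverse of a letter `(i, b)` is `(i, !b)`.) -/
def ConjugacyReduced (m : ℕ) (H : Subgroup (FreeGroup (Fin m))) : Prop :=
  ¬ ∃ x : Fin m × Bool, ∀ w ∈ LH m H, w ≠ [] →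
      w.head? = some (x.1, !x.2) ∧ w.getLast? = some x

namespace FreeGroup

variable {α : Type*} {u v : List (α × Bool)}

/-- Two nonempty reduced words whose junction does not cancel concatenate to a reduced word. -/
theorem IsReduced.append_of_getLast?_ne (hu : IsReduced u) (hv : IsReduced v)
    {a : α × Bool} (ha : v.head? = some a) (hne : u.getLast? ≠ some (a.1, !a.2)) :
    IsReduced (u ++ v) := by
  refine List.IsChain.append hu hv fun x hx y hy hxy => ?_
  rw [ha] at hy
  obtain rfl : a = y := by simpa using hy
  by_contra hb
  apply hne
  rw [Option.mem_def.1 hx]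
  obtain ⟨i, b⟩ := x
  obtain ⟨j, c⟩ := a
  cases b <;> cases c <;> simp_all

theorem getLast?_invRev (u : List (α × Bool)) :
    (invRev u).getLast? = u.head?.map fun l => (l.1, !l.2) := by
  simp [invRev]

/-- Splitting off the maximal cancellation in a product of two reduced words. -/
theorem IsReduced.exists_cancellation (hu : IsReduced u) (hv : IsReduced v) :
    ∃ p s q, u = p ++ s ∧ v = invRev s ++ q ∧ IsReduced (p ++ q) := by
  induction u using List.reverseRecOn generalizing v with
  | nil => exact ⟨[], [], v, rfl, rfl, hv⟩
  | append_singleton u l ih =>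
    rcases v with _ | ⟨c, v⟩
    · exact ⟨u ++ [l], [], [], by simp, rfl, by simpa using hu⟩
    · by_cases hc : l = (c.1, !c.2)
      · obtain ⟨p, s, q, rfl, rfl, h⟩ := ih hu.left_of_append hv.tail
        exact ⟨p, s ++ [l], q, by simp, by simp [invRev, hc], h⟩
      · exact ⟨u ++ [l], [], c :: v, by simp, rfl,
          hu.append_of_getLast?_ne hv (a := c) rfl (by simpa using hc)⟩

end FreeGroup

section SubgroupLanguage

open FreeGroup

variable {m : ℕ} {H : Subgroup (FreeGroup (Fin m))} {u v w : List (Fin m × Bool)}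

theorem mem_LH : w ∈ LH m H ↔ IsReduced w ∧ mk w ∈ H := by
  rw [isReduced_iff_reduce_eq]; rfl

theorem toWord_mem_LH {g : FreeGroup (Fin m)} (hg : g ∈ H) : g.toWord ∈ LH m H :=
  ⟨reduce_toWord g, by rwa [mk_toWord]⟩

theorem invRev_mem_LH (hw : w ∈ LH m H) : invRev w ∈ LH m H := by
  refine ⟨by rw [reduce_invRev, hw.1], ?_⟩
  rw [← inv_mk]
  exact H.inv_mem hw.2

theorem mem_LH_of_append_left (hu : u ∈ LH m H) (h : u ++ v ∈ LH m H) : v ∈ LH m H := by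
  rw [mem_LH] at *
  exact ⟨h.1.right_of_append, (H.mul_mem_cancel_left hu.2).1 (by rw [mul_mk]; exact h.2)⟩

theorem mem_LH_of_append_right (hv : v ∈ LH m H) (h : u ++ v ∈ LH m H) : u ∈ LH m H := by
  rw [mem_LH] at *
  exact ⟨h.1.left_of_append, (H.mul_mem_cancel_right hv.2).1 (by rw [mul_mk]; exact h.2)⟩

/-- The product of two words of `L_H`, after maximal cancellation, is a word of `L_H`. -/
theorem exists_cancellation_mem_LH (hu : u ∈ LH m H) (hv : v ∈ LH m H) :
    ∃ p s q, u = p ++ s ∧ v = invRev s ++ q ∧ p ++ q ∈ LH m H ∧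
      mk (p ++ q) = mk u * mk v := by
  rw [mem_LH] at hu hv
  obtain ⟨p, s, q, rfl, rfl, h⟩ := hu.1.exists_cancellation hv.1
  have hmk : mk (p ++ q) = mk (p ++ s) * mk (invRev s ++ q) := by
    simp only [← mul_mk, ← inv_mk]; group
  exact ⟨p, s, q, rfl, rfl, mem_LH.2 ⟨h, hmk ▸ H.mul_mem hu.2 hv.2⟩, hmk⟩

/-- If every nonempty word of `L_H` begins with `a` or ends with `a⁻¹`, while some nonempty word
does not begin with `a`, then `H` is cyclic. -/
theorem exists_eq_zpowers_of_forall_head?_or_getLast? (a : Fin m × Bool)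
    (hH : ∀ w ∈ LH m H, w ≠ [] → w.head? = some a ∨ w.getLast? = some (a.1, !a.2))
    (hex : ∃ w ∈ LH m H, w ≠ [] ∧ w.head? ≠ some a) :
    ∃ g, H = Subgroup.zpowers g := by
  classical
  let P : ℕ → Prop := fun n => ∃ w ∈ LH m H, w ≠ [] ∧ w.head? ≠ some a ∧ w.length = n
  have hP : ∃ n, P n := by
    obtain ⟨w, h₁, h₂, h₃⟩ := hex
    exact ⟨_, w, h₁, h₂, h₃, rfl⟩
  obtain ⟨u, hu, hu0, hua, hlen⟩ := Nat.find_spec hP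
  have hmin : ∀ w ∈ LH m H, w ≠ [] → w.head? ≠ some a → u.length ≤ w.length :=
    fun w h₁ h₂ h₃ => hlen ▸ Nat.find_min' hP ⟨w, h₁, h₂, h₃, rfl⟩
  have hu_pow : mk u ∈ Subgroup.zpowers (mk u) := Subgroup.mem_zpowers _
  have hA : ∀ n, ∀ k ∈ LH m H, k.length = n → k.head? ≠ some a →
      mk k ∈ Subgroup.zpowers (mk u) := by
    intro n
    induction n using Nat.strong_induction_on with
    | _ n ih =>
      intro k hk hkn hka
      rcases eq_or_ne k [] with rfl | hk0
      · exact one_mem _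
      obtain ⟨p, s, q, hks, hus, hpq, -⟩ := exists_cancellation_mem_LH hk (invRev_mem_LH hu)
      have hus' : u = invRev q ++ s := by
        rw [← invRev_invRev (L₁ := u), hus]; simp
      rcases eq_or_ne q [] with rfl | hq0
      · obtain rfl : u = s := by simpa using hus'
        subst hks
        have hp : p ∈ LH m H := mem_LH_of_append_right hu hk
        rw [← mul_mk]
        refine mul_mem ?_ hu_pow
        rcases eq_or_ne p [] with rfl | hp0
        · exact one_mem _
        · refine ih p.length ?_ p hp rfl ?_
          · have := List.length_pos_iff.2 hu0
            simp only [List.length_append] at hkn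
            omega
          · rwa [List.head?_append_of_ne_nil _ hp0] at hka
      · have hq0' : invRev q ≠ [] := by
          rw [← List.length_pos_iff, invRev_length]; exact List.length_pos_iff.2 hq0
        rcases eq_or_ne p [] with rfl | hp0
        · obtain rfl : k = s := by simpa using hks
          have hq : invRev q ∈ LH m H := mem_LH_of_append_right hk (hus' ▸ hu)
          have hle := hmin _ hq hq0' (by
            rwa [hus', List.head?_append_of_ne_nil _ hq0'] at hua)
          have := List.length_pos_iff.2 hk0
          rw [hus', List.length_append] at hle
          omega
        · exfalso
          rcases hH _ hpq (by simp [hp0]) with h | h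
          · rw [List.head?_append_of_ne_nil _ hp0] at h
            rw [hks, List.head?_append_of_ne_nil _ hp0] at hka
            exact hka h
          · rw [List.getLast?_append_of_ne_nil _ hq0,
              ← List.getLast?_append_of_ne_nil (invRev s) hq0, ← hus, getLast?_invRev] at h
            apply hua
            obtain ⟨l, hl, hla⟩ := Option.map_eq_some_iff.1 h
            rw [hl]
            simp only [Prod.mk.injEq, Bool.not_inj_iff] at hla
            rw [Prod.ext hla.1 hla.2]
  have hB : ∀ n, ∀ k ∈ LH m H, k.length = n → mk k ∈ Subgroup.zpowers (mk u) := by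
    intro n
    induction n using Nat.strong_induction_on with
    | _ n ih =>
      intro k hk hkn
      obtain ⟨p, s, q, hus, hks, hpq, hmk⟩ := exists_cancellation_mem_LH hu hk
      refine (Subgroup.mul_mem_cancel_left _ hu_pow).1 ?_
      rw [← hmk]
      rcases eq_or_ne p [] with rfl | hp0
      · obtain rfl : u = s := by simpa using hus
        refine ih q.length ?_ q hpq rfl
        have := List.length_pos_iff.2 hu0
        rw [hks, List.length_append, invRev_length] at hkn
        omega
      · refine hA _ _ hpq rfl ?_
        rwa [hus, List.head?_append_of_ne_nil _ hp0,
          ← List.head?_append_of_ne_nil (l₂ := q) _ hp0] at hua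
  refine ⟨mk u, le_antisymm (fun g hg => ?_) (by simpa using hu.2)⟩
  simpa [mk_toWord] using hB _ _ (toWord_mem_LH hg) rfl

/-- The middle factor witnessing irreducibility lies itself in `L_H`. -/
theorem mem_LH_of_append_append (hu : u ∈ LH m H) (hv : v ∈ LH m H)
    (h : u ++ w ++ v ∈ LH m H) : w ∈ LH m H :=
  mem_LH_of_append_left hu (mem_LH_of_append_right hv h)

theorem exists_mem_LH_ne_nil (hH : H ≠ ⊥) : ∃ w ∈ LH m H, w ≠ [] := by
  obtain ⟨g, hg, hg1⟩ := H.bot_or_exists_ne_one.resolve_left hH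
  exact ⟨_, toWord_mem_LH hg, by simpa using hg1⟩

theorem conjugacyReduced_of_irreducibleLang (hH : H ≠ ⊥) (h : IrreducibleLang (LH m H)) :
    ConjugacyReduced m H := by
  rintro ⟨x, hx⟩
  obtain ⟨u, hu, hu0⟩ := exists_mem_LH_ne_nil hH
  -- a nonempty word that can follow `u` without cancellation cannot lie in `L_H`
  have hstep : ∀ v ∈ LH m H, v ≠ [] → ∀ t, u ++ (v ++ t) ∉ LH m H := by
    intro v hv hv0 t ht
    have hred := (mem_LH.1 ht).1
    have := (List.isChain_append.1 hred).2.2 x (hx u hu hu0).2 (x.1, !x.2)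
      (by rw [List.head?_append_of_ne_nil _ hv0]; exact (hx v hv hv0).1) rfl
    simp at this
  obtain ⟨w, hw⟩ := h u hu u hu
  rcases eq_or_ne w [] with rfl | hw0
  · exact hstep u hu hu0 [] (by simpa using hw)
  · exact hstep w (mem_LH_of_append_append hu hu hw) hw0 u (by simpa using hw)

theorem not_cyclic_of_irreducibleLang (hH : H ≠ ⊥) (h : IrreducibleLang (LH m H)) :
    ¬ ∃ g, H = Subgroup.zpowers g := by
  rintro ⟨g, rfl⟩
  obtain ⟨u, hu, hu0⟩ := exists_mem_LH_ne_nil hH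
  obtain ⟨w, hw⟩ := h u hu _ (invRev_mem_LH hu)
  have hw' := mem_LH_of_append_append hu (invRev_mem_LH hu) hw
  have hcomm : mk u * mk w = mk w * mk u := by
    obtain ⟨i, hi⟩ := Subgroup.mem_zpowers_iff.1 hu.2
    obtain ⟨j, hj⟩ := Subgroup.mem_zpowers_iff.1 hw'.2
    rw [← hi, ← hj, ← zpow_add, ← zpow_add, add_comm]
  have hmk : mk (u ++ w ++ invRev u) = mk w := by
    rw [← mul_mk, ← mul_mk, ← inv_mk, hcomm, mul_inv_cancel_right]
  have heq := reduce.sound hmk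
  rw [hw.1, hw'.1] at heq
  have := congrArg List.length heq
  have := List.length_pos_iff.2 hu0
  simp only [List.length_append, invRev_length] at *
  omega

theorem ConjugacyReduced.exists_head?_ne (h : ConjugacyReduced m H) (a : Fin m × Bool) :
    ∃ w ∈ LH m H, w ≠ [] ∧ w.head? ≠ some a := by
  by_contra! hall
  refine h ⟨(a.1, !a.2), fun w hw hw0 => ⟨by simpa using hall w hw hw0, ?_⟩⟩
  have hw0' : invRev w ≠ [] := by
    rw [← List.length_pos_iff, invRev_length]; exact List.length_pos_iff.2 hw0
  rw [← invRev_invRev (L₁ := w), getLast?_invRev, hall _ (invRev_mem_LH hw) hw0']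
  rfl

theorem ConjugacyReduced.exists_getLast?_ne (h : ConjugacyReduced m H) (a : Fin m × Bool) :
    ∃ w ∈ LH m H, w ≠ [] ∧ w.getLast? ≠ some (a.1, !a.2) := by
  obtain ⟨w, hw, hw0, hwa⟩ := h.exists_head?_ne a
  refine ⟨invRev w, invRev_mem_LH hw, ?_, ?_⟩
  · rw [← List.length_pos_iff, invRev_length]; exact List.length_pos_iff.2 hw0
  · rw [getLast?_invRev]
    intro hl
    obtain ⟨l, hl, hla⟩ := Option.map_eq_some_iff.1 hl
    simp only [Prod.mk.injEq, Bool.not_inj_iff] at hla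
    exact hwa (by rw [hl, Prod.ext hla.1 hla.2])

/-- In a conjugacy reduced noncyclic subgroup one can avoid any prescribed first letter and any
prescribed last letter simultaneously. -/
theorem ConjugacyReduced.exists_head?_ne_getLast?_ne (h : ConjugacyReduced m H)
    (hcyc : ¬ ∃ g, H = Subgroup.zpowers g) (a c : Fin m × Bool) :
    ∃ w ∈ LH m H, w ≠ [] ∧ w.head? ≠ some a ∧ w.getLast? ≠ some (c.1, !c.2) := by
  by_contra! hall
  obtain ⟨u, hu, hu0, hua⟩ := h.exists_head?_ne a
  rcases eq_or_ne a c with rfl | hac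
  · refine hcyc (exists_eq_zpowers_of_forall_head?_or_getLast? a (fun w hw hw0 => ?_)
      ⟨u, hu, hu0, hua⟩)
    exact or_iff_not_imp_left.2 (hall w hw hw0)
  · obtain ⟨v, hv, hv0, hvc⟩ := h.exists_getLast?_ne c
    have hva : v.head? = some a := by
      by_contra hva
      exact hvc (hall v hv hv0 hva)
    refine hvc ?_
    rw [← List.getLast?_append_of_ne_nil u hv0]
    refine hall _ (mem_LH.2 ⟨?_, ?_⟩) (by simp [hu0]) ?_
    · refine (mem_LH.1 hu).1.append_of_getLast?_ne (mem_LH.1 hv).1 hva ?_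
      rw [hall u hu hu0 hua]
      intro heq
      simp only [Option.some.injEq, Prod.mk.injEq, Bool.not_inj_iff] at heq
      exact hac (Prod.ext heq.1.symm heq.2.symm)
    · rw [← mul_mk]; exact H.mul_mem hu.2 hv.2
    · rwa [List.head?_append_of_ne_nil _ hu0]

theorem ConjugacyReduced.irreducibleLang (h : ConjugacyReduced m H)
    (hcyc : ¬ ∃ g, H = Subgroup.zpowers g) : IrreducibleLang (LH m H) := by
  intro u hu v hv
  rcases List.eq_nil_or_concat u with rfl | ⟨u', l, rfl⟩
  · exact ⟨[], by simpa using hv⟩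
  rcases v with _ | ⟨c, v⟩
  · exact ⟨[], by simpa using hu⟩
  obtain ⟨w, hw, hw0, hwl, hwc⟩ := h.exists_head?_ne_getLast?_ne hcyc (l.1, !l.2) c
  refine ⟨w, mem_LH.2 ⟨?_, ?_⟩⟩
  · have hwv := (mem_LH.1 hw).1.append_of_getLast?_ne (mem_LH.1 hv).1 rfl hwc
    obtain ⟨d, w, rfl⟩ := List.exists_cons_of_ne_nil hw0
    rw [List.append_assoc]
    refine (mem_LH.1 hu).1.append_of_getLast?_ne hwv (a := d) rfl ?_
    rintro heq
    obtain rfl : l = (d.1, !d.2) := by simpa using heq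
    simp at hwl
  · rw [← mul_mk, ← mul_mk]
    exact H.mul_mem (H.mul_mem hu.2 hw.2) hv.2

end SubgroupLanguage

/-- For a nontrivial finitely generated subgroup `H ≤ F_m`, the language `L_H` is
irreducible iff `H` is conjugacy reduced and not cyclic. -/
theorem LH_irreducible_iff (m : ℕ) (hm : 1 ≤ m) (H : Subgroup (FreeGroup (Fin m)))
    (hnt : H ≠ ⊥) (hfg : H.FG) :
    IrreducibleLang (LH m H) ↔
      ConjugacyReduced m H ∧ ¬ ∃ g : FreeGroup (Fin m), H = Subgroup.zpowers g := by
  exact ⟨fun h => ⟨conjugacyReduced_of_irreducibleLang hnt h, not_cyclic_of_irreducibleLang hnt h⟩,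
    fun h => h.1.irreducibleLang h.2⟩
end

section
/- Let m ≥ 1 and let H be a nontrivial finitely generated subgroup of the free group F_m. Then H is conjugacy reduced and cyclic if and only if there exist two distinct letters a, b ∈ Σ such that every nonempty word of L_H either begins with a⁻¹ and ends with b, or begins with b⁻¹ and ends with a. -/
namespace FreeGroup

variable {α : Type*}

theorem head?_invRev (L : List (α × Bool)) :
    (invRev L).head? = L.getLast?.map fun x => (x.1, !x.2) := by
  simp [invRev]

theorem getLast?_invRev_s3 (L : List (α × Bool)) :
    (invRev L).getLast? = L.head?.map fun x => (x.1, !x.2) := by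
  simp [invRev]

variable [DecidableEq α]

theorem head?_toWord_pow (g : FreeGroup α) {n : ℕ} (hn : n ≠ 0) :
    (g ^ n).toWord.head? = g.toWord.head? := by
  rw [toWord_pow, reduceCyclically.reduce_flatten_replicate isReduced_toWord, if_neg hn]
  conv_rhs => rw [← reduceCyclically.conj_conjugator_reduceCyclically g.toWord]
  simp [List.head?_append, List.head?_flatten_replicate hn]

theorem getLast?_toWord_pow (g : FreeGroup α) {n : ℕ} (hn : n ≠ 0) :
    (g ^ n).toWord.getLast? = g.toWord.getLast? := by
  rw [toWord_pow, reduceCyclically.reduce_flatten_replicate isReduced_toWord, if_neg hn]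
  conv_rhs => rw [← reduceCyclically.conj_conjugator_reduceCyclically g.toWord]
  simp [List.getLast?_append, List.getLast?_flatten_replicate hn]

/-- Every nontrivial power of `g` has the same first and last letters as `g` or as `g⁻¹`. -/
theorem ends_toWord_of_mem_zpowers {g h : FreeGroup α} (hh : h ∈ Subgroup.zpowers g)
    (h1 : h ≠ 1) :
    (h.toWord.head? = g.toWord.head? ∧ h.toWord.getLast? = g.toWord.getLast?) ∨
      (h.toWord.head? = g⁻¹.toWord.head? ∧ h.toWord.getLast? = g⁻¹.toWord.getLast?) := by
  obtain ⟨k, rfl⟩ := Subgroup.mem_zpowers_iff.1 hh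
  obtain ⟨n, rfl | rfl⟩ := k.eq_nat_or_neg
  all_goals
    have hn : n ≠ 0 := by
      rintro rfl
      simp at h1
  · left
    simp only [zpow_natCast]
    exact ⟨head?_toWord_pow g hn, getLast?_toWord_pow g hn⟩
  · right
    simp only [zpow_neg, zpow_natCast, ← inv_pow]
    exact ⟨head?_toWord_pow _ hn, getLast?_toWord_pow _ hn⟩

theorem exists_maximal_common_prefix {β : Type*} (l₁ l₂ : List β) :
    ∃ p u v, l₁ = p ++ u ∧ l₂ = p ++ v ∧ ∀ x ∈ u.head?, ∀ y ∈ v.head?, x ≠ y := by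
  induction l₁ generalizing l₂ with
  | nil => exact ⟨[], [], l₂, by simp⟩
  | cons x l₁ ih =>
    cases l₂ with
    | nil => exact ⟨[], x :: l₁, [], by simp⟩
    | cons y l₂ =>
      by_cases hxy : x = y
      · obtain ⟨p, u, v, rfl, rfl, h⟩ := ih l₂
        exact ⟨x :: p, u, v, by simp, by simp [hxy], h⟩
      · exact ⟨[], x :: l₁, y :: l₂, by simpa using hxy⟩

/-- The reduced form of `g⁻¹ * h` is obtained by cancelling the maximal common prefix. -/
theorem exists_toWord_inv_mul (g h : FreeGroup α) :
    ∃ p u v, g.toWord = p ++ u ∧ h.toWord = p ++ v ∧ (g⁻¹ * h).toWord = invRev u ++ v := by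
  obtain ⟨p, u, v, hg, hh, huv⟩ := exists_maximal_common_prefix g.toWord h.toWord
  refine ⟨p, u, v, hg, hh, ?_⟩
  have hu : IsReduced (invRev u) := by
    have : IsReduced u := isReduced_toWord.infix ⟨p, [], by rw [List.append_nil, hg]⟩
    rw [isReduced_iff_reduce_eq, reduce_invRev, this.reduce_eq]
  have hv : IsReduced v := isReduced_toWord.infix ⟨p, [], by rw [List.append_nil, hh]⟩
  have hred : IsReduced (invRev u ++ v) := by
    refine List.isChain_append.2 ⟨hu, hv, fun x hx y hy hxy => ?_⟩
    rw [getLast?_invRev_s3, Option.mem_map] at hx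
    obtain ⟨z, hz, rfl⟩ := hx
    have := huv z hz y hy
    by_contra hne
    exact this (Prod.ext hxy (by simpa using hne))
  rw [← hred.reduce_eq, ← toWord_mk, ← mk_toWord (x := g), ← mk_toWord (x := h), hg, hh]
  simp only [← mul_mk, ← inv_mk]
  group

/-- If no nontrivial element of `H` starts with the inverse of `b` and ends with `b`, then among
the elements of `H` ending with `b`, the shorter ones are prefixes of the longer ones. -/
theorem norm_inv_mul_lt_and_getLast? {H : Subgroup (FreeGroup α)} {b : α × Bool}
    (hb : ∀ g ∈ H, g.toWord.head? = some (b.1, !b.2) → g.toWord.getLast? ≠ some b)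
    {g h : FreeGroup α} (hg : g ∈ H) (hh : h ∈ H) (hgb : g.toWord.getLast? = some b)
    (hhb : h.toWord.getLast? = some b) (hle : g.norm ≤ h.norm) :
    (g⁻¹ * h).norm < h.norm ∧ (g⁻¹ * h ≠ 1 → (g⁻¹ * h).toWord.getLast? = some b) := by
  obtain ⟨p, u, v, hgp, hhp, hgh⟩ := exists_toWord_inv_mul g h
  have hu : u = [] := by
    by_contra hu
    have hv : v ≠ [] := by
      rintro rfl
      exact hu (by simpa [norm, hgp, hhp] using hle)
    refine hb _ (H.mul_mem (H.inv_mem hg) hh) ?_ ?_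
    · rw [hgp, List.getLast?_append_of_ne_nil _ hu] at hgb
      simp [hgh, List.head?_append, head?_invRev, hgb]
    · rw [hhp, List.getLast?_append_of_ne_nil _ hv] at hhb
      rw [hgh, List.getLast?_append_of_ne_nil _ hv, hhb]
  subst hu
  simp only [invRev_empty, List.nil_append, List.append_nil] at hgh hgp
  refine ⟨?_, fun h1 => ?_⟩
  · have : p ≠ [] := by
      rintro rfl
      simp [hgp] at hgb
    simpa [norm, hgh, hhp, List.length_pos_iff] using this
  · have hv : v ≠ [] := by rwa [← hgh, Ne, toWord_eq_nil_iff]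
    rwa [hgh, ← List.getLast?_append_of_ne_nil p hv, ← hhp]

/-- If the reduced forms of a nontrivial element of `H` or of its inverse always end with `b`, but
no element starts with the inverse of `b` and ends with `b`, then `H` is cyclic. -/
theorem exists_eq_zpowers_of_getLast? {H : Subgroup (FreeGroup α)} (hnt : H ≠ ⊥) {b : α × Bool}
    (hb : ∀ g ∈ H, g.toWord.head? = some (b.1, !b.2) → g.toWord.getLast? ≠ some b)
    (hH : ∀ g ∈ H, g ≠ 1 → g.toWord.getLast? = some b ∨ g⁻¹.toWord.getLast? = some b) :
    ∃ g, H = Subgroup.zpowers g := by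
  have hne : {g | g ∈ H ∧ g.toWord.getLast? = some b}.Nonempty := by
    obtain ⟨g, hg, h1⟩ := H.bot_or_exists_ne_one.resolve_left hnt
    exact (hH g hg h1).elim (fun h => ⟨g, hg, h⟩) fun h => ⟨g⁻¹, H.inv_mem hg, h⟩
  let g := Function.argminOn norm _ hne
  obtain ⟨hg, hgb⟩ : g ∈ H ∧ g.toWord.getLast? = some b := Function.argminOn_mem norm _ hne
  have key : ∀ n, ∀ h ∈ H, h.norm = n → h.toWord.getLast? = some b →
      h ∈ Subgroup.zpowers g := by
    intro n
    induction n using Nat.strong_induction_on with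
    | _ n ih =>
      rintro h hh rfl hhb
      obtain ⟨hlt, hlast⟩ := norm_inv_mul_lt_and_getLast? hb hg hh hgb hhb
        (Function.argminOn_le norm _ (show h ∈ {g | g ∈ H ∧ g.toWord.getLast? = some b} from
          ⟨hh, hhb⟩))
      rw [← Subgroup.mul_mem_cancel_left (x := g⁻¹) _
        (Subgroup.inv_mem _ (Subgroup.mem_zpowers g))]
      by_cases h1 : g⁻¹ * h = 1
      · rw [h1]
        exact Subgroup.one_mem _
      · exact ih _ hlt _ (H.mul_mem (H.inv_mem hg) hh) rfl (hlast h1)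
  refine ⟨g, le_antisymm (fun h hh => ?_) (by simpa using hg)⟩
  by_cases h1 : h = 1
  · rw [h1]
    exact Subgroup.one_mem _
  · rcases hH h hh h1 with h2 | h2
    · exact key _ h hh rfl h2
    · exact (Subgroup.inv_mem_iff _).1 (key _ _ (H.inv_mem hh) rfl h2)

end FreeGroup

open FreeGroup in
theorem forall_mem_LH_iff {m : ℕ} {H : Subgroup (FreeGroup (Fin m))}
    {P : List (Fin m × Bool) → Prop} :
    (∀ w ∈ LH m H, w ≠ [] → P w) ↔ ∀ g ∈ H, g ≠ 1 → P g.toWord := by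
  constructor
  · intro h g hg h1
    exact h _ ⟨reduce_toWord g, by rwa [mk_toWord]⟩ (by rwa [Ne, toWord_eq_nil_iff])
  · rintro h w ⟨hw, hwH⟩ hne
    have := h _ hwH (by rwa [Ne, ← toWord_eq_nil_iff, toWord_mk, hw])
    rwa [toWord_mk, hw] at this

/-- A nontrivial finitely generated subgroup `H ≤ F_m` is conjugacy reduced and cyclic
iff there exist distinct letters `a ≠ b` in `Σ` such that every nonempty word of `L_H`
either begins with `a⁻¹` and ends with `b`, or begins with `b⁻¹` and ends with `a`. -/
theorem conjugacyReduced_and_cyclic_iff (m : ℕ) (hm : 1 ≤ m)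
    (H : Subgroup (FreeGroup (Fin m))) (hnt : H ≠ ⊥) (hfg : H.FG) :
    (ConjugacyReduced m H ∧ ∃ g : FreeGroup (Fin m), H = Subgroup.zpowers g) ↔
      ∃ a b : Fin m × Bool, a ≠ b ∧ ∀ w ∈ LH m H, w ≠ [] →
        (w.head? = some (a.1, !a.2) ∧ w.getLast? = some b) ∨
        (w.head? = some (b.1, !b.2) ∧ w.getLast? = some a) := by
  simp only [ConjugacyReduced, forall_mem_LH_iff]
  obtain ⟨g₀, hg₀, hg₀1⟩ := H.bot_or_exists_ne_one.resolve_left hnt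
  constructor
  · rintro ⟨hcr, g, rfl⟩
    have hg : g.toWord ≠ [] := by
      rw [Ne, FreeGroup.toWord_eq_nil_iff]
      rintro rfl
      simp at hnt
    obtain ⟨x, hx⟩ := Option.isSome_iff_exists.1 (List.isSome_head?.2 hg)
    obtain ⟨b, hb⟩ : ∃ b, g.toWord.getLast? = some b := ⟨_, List.getLast?_eq_some_getLast hg⟩
    have key : ∀ h ∈ Subgroup.zpowers g, h ≠ 1 →
        (h.toWord.head? = some (x.1, !!x.2) ∧ h.toWord.getLast? = some b) ∨
        (h.toWord.head? = some (b.1, !b.2) ∧ h.toWord.getLast? = some (x.1, !x.2)) := by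
      intro h hh h1
      simpa [FreeGroup.toWord_inv, FreeGroup.head?_invRev, FreeGroup.getLast?_invRev_s3, hx, hb]
        using FreeGroup.ends_toWord_of_mem_zpowers hh h1
    refine ⟨(x.1, !x.2), b, ?_, key⟩
    rintro rfl
    exact hcr ⟨(x.1, !x.2), fun h hh h1 => or_self_iff.1 (key h hh h1)⟩
  · rintro ⟨a, b, hab, hH⟩
    have ends_not_inverse : ∀ x, ∀ g ∈ H, g.toWord.head? = some (x.1, !x.2) →
        g.toWord.getLast? ≠ some x := by
      intro x g hg hhead hlast
      have h1 : g ≠ 1 := by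
        rintro rfl
        simp at hhead
      have := hH g hg h1
      simp only [hhead, hlast, Option.some.injEq, Prod.ext_iff, Bool.not_inj_iff] at this
      exact hab (Prod.ext_iff.2 (by grind))
    refine ⟨?_, FreeGroup.exists_eq_zpowers_of_getLast? hnt (ends_not_inverse b) ?_⟩
    · rintro ⟨x, hx⟩
      obtain ⟨hhead, hlast⟩ := hx g₀ hg₀ hg₀1
      exact ends_not_inverse x g₀ hg₀ hhead hlast
    · intro g hg h1
      refine (hH g hg h1).imp And.right fun h => ?_
      simp [FreeGroup.toWord_inv, FreeGroup.getLast?_invRev_s3, h.1]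
end

section
/- Let m ≥ 1 and let H be a nontrivial subgroup of the free group F_m. Then H is not conjugacy reduced if and only if there exists a letter x ∈ Σ such that every nonempty word of L_H ends with x (equivalently: H is conjugacy reduced if and only if there exist two words in L_H with different last letters). In particular, if every nonempty word of L_H ends with the same letter x, then every nonempty word of L_H begins with x⁻¹. -/
theorem FreeGroup.getLast?_invRev_s4 {α : Type*} (w : List (α × Bool)) :
    (FreeGroup.invRev w).getLast? = w.head?.map fun a => (a.1, !a.2) := by
  simp [FreeGroup.invRev]

theorem invRev_mem_LH_s4 {m : ℕ} {H : Subgroup (FreeGroup (Fin m))} {w : List (Fin m × Bool)}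
    (hw : w ∈ LH m H) : FreeGroup.invRev w ∈ LH m H := by
  refine ⟨by rw [FreeGroup.reduce_invRev, hw.1], ?_⟩
  rw [← FreeGroup.inv_mk]
  exact H.inv_mem hw.2

theorem head?_of_forall_getLast? {m : ℕ} {H : Subgroup (FreeGroup (Fin m))} {x : Fin m × Bool}
    (hx : ∀ w ∈ LH m H, w ≠ [] → w.getLast? = some x) {w : List (Fin m × Bool)}
    (hw : w ∈ LH m H) (hne : w ≠ []) : w.head? = some (x.1, !x.2) := by
  have hinv := hx _ (invRev_mem_LH_s4 hw) (by simpa [FreeGroup.invRev] using hne)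
  rw [FreeGroup.getLast?_invRev_s4, Option.map_eq_some_iff] at hinv
  obtain ⟨a, ha, rfl⟩ := hinv
  simpa using ha

/-- For a nontrivial subgroup `H ≤ F_m`: `H` fails to be conjugacy reduced iff there is a
letter `x` with which every nonempty word of `L_H` ends; moreover, if every nonempty word
of `L_H` ends with the letter `x`, then every nonempty word of `L_H` begins with `x⁻¹`. -/
theorem not_conjugacyReduced_iff (m : ℕ) (hm : 1 ≤ m)
    (H : Subgroup (FreeGroup (Fin m))) (hnt : H ≠ ⊥) :
    (¬ ConjugacyReduced m H ↔
        ∃ x : Fin m × Bool, ∀ w ∈ LH m H, w ≠ [] → w.getLast? = some x) ∧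
      (∀ x : Fin m × Bool, (∀ w ∈ LH m H, w ≠ [] → w.getLast? = some x) →
        ∀ w ∈ LH m H, w ≠ [] → w.head? = some (x.1, !x.2)) := by
  refine ⟨?_, fun x hx w => head?_of_forall_getLast? hx⟩
  rw [ConjugacyReduced, not_not]
  exact exists_congr fun x => ⟨fun h w hw hne => (h w hw hne).2,
    fun h w hw hne => ⟨head?_of_forall_getLast? h hw hne, h w hw hne⟩⟩
end

section
/- Let F₃ be the free group on three generators a, b, c, and let H be the subgroup of F₃ generated by {a², b, c, aba⁻¹, aca⁻¹}. Then the cogrowth series of H satisfies the rational identity (1−5z)(1−2z+5z²) · Σ_{n≥0} |H_n| zⁿ = (1+z)(1−4z+5z²) in the ring of formal power series over the rationals. -/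
/-- `|H_n|`: the number of elements of the subgroup `H` of the free group `F₃`
whose reduced word length is `n`. -/
noncomputable def cogrowthCoeff (H : Subgroup (FreeGroup (Fin 3))) (n : ℕ) : ℕ :=
  Nat.card {g : FreeGroup (Fin 3) // g ∈ H ∧ (FreeGroup.toWord g).length = n}

open Finset

/-- The letters that may follow the letter `l` in a reduced word. -/
def followers {α : Type*} [Fintype α] [DecidableEq α] (l : α × Bool) : Finset (α × Bool) :=
  univ.filter fun m => l.1 = m.1 → l.2 = m.2

/-- The reduced words of length `n` whose first letter, if any, lies in `S`. -/
def reducedWords {α : Type*} [Fintype α] [DecidableEq α] :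
    ℕ → Finset (α × Bool) → Finset (List (α × Bool))
  | 0, _ => {[]}
  | n + 1, S => S.biUnion fun l =>
      (reducedWords n (followers l)).map ⟨List.cons l, List.cons_injective⟩

theorem mem_reducedWords {α : Type*} [Fintype α] [DecidableEq α] (n : ℕ)
    (S : Finset (α × Bool)) (w : List (α × Bool)) :
    w ∈ reducedWords n S ↔ w.length = n ∧ FreeGroup.IsReduced w ∧ ∀ l ∈ w.head?, l ∈ S := by
  induction n generalizing S w with
  | zero =>
    simp only [reducedWords, mem_singleton, List.length_eq_zero_iff]
    constructor
    · rintro rfl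
      simp
    · exact fun h => h.1
  | succ n ih =>
    cases w with
    | nil => simp [reducedWords]
    | cons x w =>
      simp only [reducedWords, mem_biUnion, mem_map, Function.Embedding.coeFn_mk,
        List.cons.injEq, ih, followers, mem_filter, mem_univ, true_and, List.length_cons,
        List.head?_cons, Option.mem_some_iff, forall_eq', FreeGroup.IsReduced, List.isChain_cons,
        Nat.add_right_cancel_iff]
      constructor
      · rintro ⟨l, hl, w, h, rfl, rfl⟩
        exact ⟨h.1, ⟨h.2.2, h.2.1⟩, hl⟩
      · rintro ⟨h1, ⟨h2, h3⟩, hx⟩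
        exact ⟨x, hx, w, ⟨h1, h3, h2⟩, rfl, rfl⟩

/-- The sum over `reducedWords n S` of the product of the weights of the letters. -/
def weightedCount {α R : Type*} [Fintype α] [DecidableEq α] [CommSemiring R]
    (χ : α × Bool → R) (n : ℕ) (S : Finset (α × Bool)) : R :=
  ∑ w ∈ reducedWords n S, (w.map χ).prod

theorem weightedCount_zero {α R : Type*} [Fintype α] [DecidableEq α] [CommSemiring R]
    (χ : α × Bool → R) (S : Finset (α × Bool)) : weightedCount χ 0 S = 1 := by
  simp [weightedCount, reducedWords]

theorem weightedCount_succ {α R : Type*} [Fintype α] [DecidableEq α] [CommSemiring R]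
    (χ : α × Bool → R) (n : ℕ) (S : Finset (α × Bool)) :
    weightedCount χ (n + 1) S = ∑ l ∈ S, χ l * weightedCount χ n (followers l) := by
  unfold weightedCount
  rw [reducedWords, sum_biUnion]
  · simp [mul_sum]
  · intro l _ m _ hlm
    refine disjoint_left.2 fun w hw hw' => hlm ?_
    simp only [mem_map, Function.Embedding.coeFn_mk] at hw hw'
    obtain ⟨u, _, rfl⟩ := hw
    obtain ⟨v, _, h⟩ := hw'
    exact (List.cons.inj h).1.symm

/-- The weight `s` on `a^{±1}` and `1` on `b^{±1}`, `c^{±1}`. -/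
def letterWeight (s : ℚ) (l : Fin 3 × Bool) : ℚ := if l.1 = 0 then s else 1

/-- The weighted counts of the reduced words of length `n` that may follow `a`,
respectively `b`. -/
def followerCount (s : ℚ) : ℕ → ℚ × ℚ
  | 0 => (1, 1)
  | n + 1 => (s * (followerCount s n).1 + 4 * (followerCount s n).2,
      2 * s * (followerCount s n).1 + 3 * (followerCount s n).2)

theorem weightedCount_followers (s : ℚ) (n : ℕ) (l : Fin 3 × Bool) :
    weightedCount (letterWeight s) n (followers l) =
      if l.1 = 0 then (followerCount s n).1 else (followerCount s n).2 := by
  induction n generalizing l with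
  | zero => simp [weightedCount_zero, followerCount]
  | succ n ih =>
    simp only [weightedCount_succ, ih, followerCount]
    fin_cases l <;>
      simp [followers, letterWeight, sum_filter, Fintype.sum_prod_type, Fin.sum_univ_three] <;>
      ring

theorem weightedCount_univ_succ (s : ℚ) (n : ℕ) :
    weightedCount (letterWeight s) (n + 1) univ =
      2 * s * (followerCount s n).1 + 4 * (followerCount s n).2 := by
  simp only [weightedCount_succ, weightedCount_followers]
  simp [letterWeight, Fintype.sum_prod_type, Fin.sum_univ_three]
  ring

theorem followerCount_one (n : ℕ) : followerCount 1 n = (5 ^ n, 5 ^ n) := by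
  induction n with
  | zero => simp [followerCount]
  | succ n ih =>
    simp only [followerCount, ih, Prod.mk.injEq]
    constructor <;> ring

/-- The homomorphism from `F₃` to `{±1}` that sends `a` to `-1` and `b`, `c` to `1`. -/
def parityHom : FreeGroup (Fin 3) →* ℤˣ := FreeGroup.lift fun i => if i = 0 then -1 else 1

theorem coe_parityHom (g : FreeGroup (Fin 3)) :
    ((parityHom g : ℤ) : ℚ) = (g.toWord.map (letterWeight (-1))).prod := by
  have h (w : List (Fin 3 × Bool)) :
      ((parityHom (FreeGroup.mk w) : ℤ) : ℚ) = (w.map (letterWeight (-1))).prod := by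
    rw [parityHom, FreeGroup.lift_mk]
    induction w with
    | nil => simp
    | cons x w ih =>
      simp only [List.map_cons, List.prod_cons, Units.val_mul, Int.cast_mul, ih]
      congr 1
      obtain ⟨i, b⟩ := x
      by_cases hi : i = 0 <;> cases b <;> simp [letterWeight, hi]
  rw [← h, FreeGroup.mk_toWord]

theorem closure_eq_ker_parityHom :
    Subgroup.closure
      {FreeGroup.of 0 ^ 2, FreeGroup.of 1, FreeGroup.of 2,
        FreeGroup.of 0 * FreeGroup.of 1 * (FreeGroup.of 0)⁻¹,
        FreeGroup.of 0 * FreeGroup.of 2 * (FreeGroup.of 0)⁻¹} = parityHom.ker := by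
  set H : Subgroup (FreeGroup (Fin 3)) := Subgroup.closure
      {FreeGroup.of 0 ^ 2, FreeGroup.of 1, FreeGroup.of 2,
        FreeGroup.of 0 * FreeGroup.of 1 * (FreeGroup.of 0)⁻¹,
        FreeGroup.of 0 * FreeGroup.of 2 * (FreeGroup.of 0)⁻¹} with hH
  have hle : H ≤ parityHom.ker := by
    rw [hH, Subgroup.closure_le]
    rintro g (rfl | rfl | rfl | rfl | rfl) <;> simp [MonoidHom.mem_ker, parityHom]
  have ha : (FreeGroup.of 0 * FreeGroup.of 0 : FreeGroup (Fin 3)) ∈ H := by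
    rw [← pow_two]
    exact Subgroup.subset_closure (by simp)
  have hof (i : Fin 3) (hi : i ≠ 0) : FreeGroup.of i ∈ H ∧
      FreeGroup.of 0 * FreeGroup.of i * (FreeGroup.of 0)⁻¹ ∈ H := by
    fin_cases i
    · exact absurd rfl hi
    · exact ⟨Subgroup.subset_closure (by simp), Subgroup.subset_closure (by simp)⟩
    · exact ⟨Subgroup.subset_closure (by simp), Subgroup.subset_closure (by simp)⟩
  have hcoset (w : List (Fin 3 × Bool)) :
      FreeGroup.mk w ∈ H ∨ FreeGroup.of 0 * FreeGroup.mk w ∈ H := by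
    induction w with
    | nil => exact Or.inl H.one_mem
    | cons x w ih =>
      obtain ⟨i, b⟩ := x
      have hx : FreeGroup.mk ((i, b) :: w) =
          (cond b (FreeGroup.of i) (FreeGroup.of i)⁻¹) * FreeGroup.mk w := by
        cases b <;> simp [FreeGroup.of, FreeGroup.invRev]
      rw [hx]
      generalize FreeGroup.mk w = g at ih
      by_cases hi : i = 0
      · subst hi
        cases b
        · rcases ih with h | h
          · exact Or.inr (by simpa using h)
          · exact Or.inl (by simpa [mul_assoc] using H.mul_mem (H.inv_mem ha) h)
        · rcases ih with h | h
          · exact Or.inr (by simpa [mul_assoc] using H.mul_mem ha h)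
          · exact Or.inl h
      · obtain ⟨h1, h2⟩ := hof i hi
        cases b
        · rcases ih with h | h
          · exact Or.inl (H.mul_mem (H.inv_mem h1) h)
          · exact Or.inr (by simpa [mul_assoc] using H.mul_mem (H.inv_mem h2) h)
        · rcases ih with h | h
          · exact Or.inl (H.mul_mem h1 h)
          · exact Or.inr (by simpa [mul_assoc] using H.mul_mem h2 h)
  refine le_antisymm hle fun g hg => ?_
  have hg' := hcoset g.toWord
  rw [FreeGroup.mk_toWord] at hg'
  refine hg'.resolve_right fun h => ?_
  have h' := hle h
  rw [MonoidHom.mem_ker] at hg h'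
  rw [map_mul, hg] at h'
  simp [parityHom] at h'

theorem cogrowthCoeff_ker_parityHom (n : ℕ) :
    (cogrowthCoeff parityHom.ker n : ℚ) =
      (weightedCount (letterWeight 1) n univ + weightedCount (letterWeight (-1)) n univ) / 2 := by
  have himage : FreeGroup.toWord '' {g | g ∈ parityHom.ker ∧ g.toWord.length = n} =
      ((reducedWords n univ).filter fun w => (w.map (letterWeight (-1))).prod = 1 :
        Finset (List (Fin 3 × Bool))) := by
    ext w
    simp only [Set.mem_image, Set.mem_ofPred_eq, coe_filter, mem_reducedWords, mem_univ,
      implies_true, and_true, MonoidHom.mem_ker]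
    constructor
    · rintro ⟨g, ⟨hg, rfl⟩, rfl⟩
      exact ⟨⟨rfl, FreeGroup.isReduced_toWord⟩, by simp [← coe_parityHom, hg]⟩
    · rintro ⟨⟨hn, hw⟩, h⟩
      have hmk : (FreeGroup.mk w).toWord = w := by rw [FreeGroup.toWord_mk, hw.reduce_eq]
      rw [← hmk, ← coe_parityHom] at h
      exact ⟨FreeGroup.mk w, ⟨Units.val_eq_one.1 (Int.cast_eq_one.1 h), by rw [hmk, hn]⟩, hmk⟩
  have hcard : cogrowthCoeff parityHom.ker n =
      #{w ∈ reducedWords n univ | (w.map (letterWeight (-1))).prod = 1} := by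
    rw [← Set.ncard_coe_finset, ← himage, Set.ncard_image_of_injective _ FreeGroup.toWord_injective]
    rfl
  rw [hcard, card_filter, weightedCount, weightedCount, ← sum_add_distrib, sum_div]
  push_cast
  refine sum_congr rfl fun w hw => ?_
  have hmk : (FreeGroup.mk w).toWord = w := by
    rw [FreeGroup.toWord_mk, ((mem_reducedWords _ _ _).1 hw).2.1.reduce_eq]
  have hone : (w.map (letterWeight 1)).prod = 1 :=
    List.prod_eq_one (by simp [letterWeight])
  rw [hone, ← hmk, ← coe_parityHom]
  rcases Int.units_eq_one_or (parityHom (FreeGroup.mk w)) with h | h <;> norm_num [h]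

/-- For the subgroup `H = ⟨a², b, c, aba⁻¹, aca⁻¹⟩` of `F₃`, the cogrowth series
satisfies `(1−5z)(1−2z+5z²)·H(z) = (1+z)(1−4z+5z²)` in `ℚ⟦z⟧`. -/
theorem example_cogrowth_identity (H : Subgroup (FreeGroup (Fin 3)))
    (hH : H = Subgroup.closure
      {FreeGroup.of 0 ^ 2, FreeGroup.of 1, FreeGroup.of 2,
        FreeGroup.of 0 * FreeGroup.of 1 * (FreeGroup.of 0)⁻¹,
        FreeGroup.of 0 * FreeGroup.of 2 * (FreeGroup.of 0)⁻¹}) :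
    (1 - 5 * PowerSeries.X) * (1 - 2 * PowerSeries.X + 5 * PowerSeries.X ^ 2) *
        PowerSeries.mk (fun n => (cogrowthCoeff H n : ℚ)) =
      (1 + PowerSeries.X) * (1 - 4 * PowerSeries.X + 5 * PowerSeries.X ^ 2) := by
  rw [closure_eq_ker_parityHom] at hH
  subst hH
  have hzero : (cogrowthCoeff parityHom.ker 0 : ℚ) = 1 := by
    rw [cogrowthCoeff_ker_parityHom, weightedCount_zero, weightedCount_zero]
    norm_num
  have hsucc (n : ℕ) : (cogrowthCoeff parityHom.ker (n + 1) : ℚ) =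
      3 * 5 ^ n - (followerCount (-1) n).1 + 2 * (followerCount (-1) n).2 := by
    rw [cogrowthCoeff_ker_parityHom, weightedCount_univ_succ, weightedCount_univ_succ,
      followerCount_one]
    ring
  set f : PowerSeries ℚ := PowerSeries.mk fun n => (cogrowthCoeff parityHom.ker n : ℚ) with hf
  have hC (q : ℚ) (n : ℕ) (φ : PowerSeries ℚ) :
      PowerSeries.coeff n (PowerSeries.C q * φ) = q * PowerSeries.coeff n φ :=
    PowerSeries.coeff_C_mul n φ q
  have hleft : (1 - 5 * PowerSeries.X) * (1 - 2 * PowerSeries.X + 5 * PowerSeries.X ^ 2) * f =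
      f - PowerSeries.C 7 * (PowerSeries.X * f)
        + PowerSeries.C 15 * (PowerSeries.X * (PowerSeries.X * f))
        - PowerSeries.C 25 * (PowerSeries.X * (PowerSeries.X * (PowerSeries.X * f))) := by
    simp only [map_ofNat]
    ring
  have hright : (1 + PowerSeries.X) * (1 - 4 * PowerSeries.X + 5 * PowerSeries.X ^ 2) =
      (1 : PowerSeries ℚ) - PowerSeries.C 3 * (PowerSeries.X * 1)
        + PowerSeries.X * (PowerSeries.X * 1)
        + PowerSeries.C 5 * (PowerSeries.X * (PowerSeries.X * (PowerSeries.X * 1))) := by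
    simp only [map_ofNat]
    ring
  rw [hleft, hright]
  ext n
  match n with
  | 0 | 1 | 2 | 3 | n + 4 =>
    simp only [map_add, map_sub, hC, PowerSeries.coeff_succ_X_mul, PowerSeries.coeff_zero_X_mul,
      hf, PowerSeries.coeff_mk, hzero, hsucc, PowerSeries.coeff_one, followerCount]
    norm_num
    try ring
end

section
/- Let m ≥ 1 and let H be a nontrivial finitely generated subgroup of the free group F_m. Then there exists g ∈ F_m such that the conjugate subgroup gHg⁻¹ is conjugacy reduced. -/
/-- Every nontrivial finitely generated subgroup `H ≤ F_m` has a conjugate `gHg⁻¹`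
that is conjugacy reduced. -/
theorem exists_conjugacy_reduced_conjugate (m : ℕ) (hm : 1 ≤ m)
    (H : Subgroup (FreeGroup (Fin m))) (hnt : H ≠ ⊥) (hfg : H.FG) :
    ∃ g : FreeGroup (Fin m),
      ConjugacyReduced m (Subgroup.map (MulAut.conj g).toMonoidHom H) := by
  obtain ⟨h, hH, hne⟩ := H.bot_or_exists_ne_one.resolve_left hnt
  set c := FreeGroup.mk (FreeGroup.reduceCyclically.conjugator h.toWord) with hc
  set r := FreeGroup.reduceCyclically h.toWord with hr
  have hcyc : FreeGroup.IsCyclicallyReduced r :=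
    FreeGroup.reduceCyclically.isCyclicallyReduced FreeGroup.isReduced_toWord
  have hconj : h = c * FreeGroup.mk r * c⁻¹ := by
    rw [hc, hr, FreeGroup.inv_mk, FreeGroup.mul_mk, FreeGroup.mul_mk,
      FreeGroup.reduceCyclically.conj_conjugator_reduceCyclically, FreeGroup.mk_toWord]
  refine ⟨c⁻¹, ?_⟩
  rintro ⟨x, hx⟩
  have hr_mem : r ∈ LH m (Subgroup.map (MulAut.conj c⁻¹).toMonoidHom H) := by
    refine ⟨hcyc.isReduced.reduce_eq, h, hH, ?_⟩
    simp [hconj, mul_assoc]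
  have hr_ne : r ≠ [] := by
    intro h0
    apply hne
    rw [hconj, h0, ← FreeGroup.one_eq_mk, mul_one, mul_inv_cancel]
  obtain ⟨hhead, hlast⟩ := hx r hr_mem hr_ne
  have hletter := (FreeGroup.isCyclicallyReduced_iff.mp hcyc).2 x hlast (x.1, !x.2) hhead rfl
  simp at hletter
end
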